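/- arXiv:1701.08597 — 2 statements merged into one kernel-verified Lean document; each statement's English description precedes it below -/
import Mathlib

section
/- A diagonalizable matrix A ∈ M_n(ℂ) satisfies A^c = A^* if and only if A is normal. -/
open Matrix Polynomial
open scoped ComplexConjugate

noncomputable section

/-- `B` is the conjugate `A^c` of `A`, defined via a Jordan-type decomposition
`A = T (D + N) T⁻¹` with `D` diagonal, `N` nilpotent commuting with `D`,
by `A^c = T ⬝ \overline{D} ⬝ T⁻¹`. -/
def Matrix.IsJordanConj {n : Type*} [Fintype n] [DecidableEq n]
    (A B : Matrix n n ℂ) : Prop :=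
  ∃ T D N : Matrix n n ℂ, IsUnit T ∧ D.IsDiag ∧ IsNilpotent N ∧ D * N = N * D ∧
    A = T * (D + N) * T⁻¹ ∧ B = T * D.map (starRingEnd ℂ) * T⁻¹

/-- A diagonalizable matrix satisfies `A^c = A^*` iff `A` is normal. -/
theorem conj_eq_conjTranspose_iff_normal {n : ℕ} (A T D : Matrix (Fin n) (Fin n) ℂ)
    (hT : IsUnit T) (hD : D.IsDiag) (hA : A = T * D * T⁻¹) :
    T * D.map (starRingEnd ℂ) * T⁻¹ = Aᴴ ↔ A * Aᴴ = Aᴴ * A := by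
  obtain ⟨d, rfl⟩ : ∃ d, D = diagonal d := ⟨D.diag, hD.diagonal_diag.symm⟩
  have hdet : IsUnit T.det := (Matrix.isUnit_iff_isUnit_det T).1 hT
  have h1 : T⁻¹ * T = 1 := Matrix.nonsing_inv_mul T hdet
  have h2 : T * T⁻¹ = 1 := Matrix.mul_nonsing_inv T hdet
  have hmap : (diagonal d).map (starRingEnd ℂ) = diagonal (fun i => conj (d i)) := by
    rw [Matrix.diagonal_map (map_zero _)]
  rw [hmap]
  have key : ∀ X Y : Matrix (Fin n) (Fin n) ℂ,
      (T * X * T⁻¹) * (T * Y * T⁻¹) = T * (X * Y) * T⁻¹ := by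
    intro X Y
    calc (T * X * T⁻¹) * (T * Y * T⁻¹) = T * X * (T⁻¹ * T) * Y * T⁻¹ := by
          simp only [Matrix.mul_assoc]
      _ = _ := by rw [h1]; simp only [Matrix.mul_assoc, Matrix.mul_one]
  constructor
  · intro h
    rw [← h, hA, key, key, diagonal_mul_diagonal, diagonal_mul_diagonal]
    simp only [mul_comm]
  · intro h
    have hAT : A * T = T * diagonal d := by
      rw [hA, Matrix.mul_assoc, h1, Matrix.mul_one]
    suffices hs : Aᴴ * T = T * diagonal (fun i => conj (d i)) by
      rw [← hs, Matrix.mul_assoc, h2, Matrix.mul_one]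
    have hcol : ∀ i, Aᴴ *ᵥ T.col i = conj (d i) • T.col i := by
      intro i
      have hv : A *ᵥ T.col i = d i • T.col i := by
        ext k
        have := congrFun (congrFun hAT k) i
        rw [mul_diagonal] at this
        simpa [Matrix.mul_apply, mulVec, dotProduct, mul_comm (d i)] using this
      have hBH : (A - d i • (1 : Matrix (Fin n) (Fin n) ℂ))ᴴ
          = Aᴴ - conj (d i) • (1 : Matrix (Fin n) (Fin n) ℂ) := by
        simp [conjTranspose_sub, conjTranspose_smul]
      have hB : (A - d i • (1 : Matrix (Fin n) (Fin n) ℂ)) *ᵥ T.col i = 0 := by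
        rw [sub_mulVec, smul_mulVec, one_mulVec, hv, sub_self]
      have hN : (A - d i • (1 : Matrix (Fin n) (Fin n) ℂ))
            * (A - d i • (1 : Matrix (Fin n) (Fin n) ℂ))ᴴ
          = (A - d i • (1 : Matrix (Fin n) (Fin n) ℂ))ᴴ
            * (A - d i • (1 : Matrix (Fin n) (Fin n) ℂ)) := by
        rw [hBH]
        simp only [Matrix.sub_mul, Matrix.mul_sub, Matrix.smul_mul, Matrix.mul_smul,
          Matrix.one_mul, Matrix.mul_one, h, smul_sub, smul_smul, mul_comm (conj (d i)) (d i)]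
        abel
      open scoped ComplexOrder in
      rw [← conjTranspose_mul_self_mulVec_eq_zero, ← hN,
        self_mul_conjTranspose_mulVec_eq_zero, hBH, sub_mulVec, smul_mulVec,
        one_mulVec, sub_eq_zero] at hB
      exact hB
    ext k i
    have := congrFun (hcol i) k
    rw [mul_diagonal]
    simpa [Matrix.mul_apply, mulVec, dotProduct, mul_comm (conj (d i))] using this
end
end

section
/- Let M = [[A, C],[0, B]] be block upper triangular with A ∈ M_k(ℂ), B ∈ M_m(ℂ) and σ(A) ∩ σ(B) = ∅. If X is the unique solution of the Sylvester equation AX - XB = C, then M^c = [[A^c, A^c X - X B^c],[0, B^c]]. -/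
open Matrix Polynomial
open scoped ComplexConjugate

noncomputable section

theorem jordan_intertwine {n : Type*} [Fintype n] [DecidableEq n]
    (d e : n → ℂ) (N K P : Matrix n n ℂ) (hN : IsNilpotent N) (hK : IsNilpotent K)
    (hdN : diagonal d * N = N * diagonal d) (heK : diagonal e * K = K * diagonal e)
    (h : (diagonal d + N) * P = P * (diagonal e + K)) (i j : n) (hij : P i j ≠ 0) :
    d i = e j := by
  let L : Module.End ℂ (Matrix n n ℂ) :=
    LinearMap.mulLeft ℂ (diagonal d) - LinearMap.mulRight ℂ (diagonal e)
  let V : Module.End ℂ (Matrix n n ℂ) := LinearMap.mulRight ℂ K - LinearMap.mulLeft ℂ N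
  have hLV : Commute L V := by
    apply LinearMap.ext
    intro Q
    simp only [L, V, Module.End.mul_apply, LinearMap.sub_apply, LinearMap.mulLeft_apply,
      LinearMap.mulRight_apply, mul_sub, sub_mul]
    rw [← mul_assoc (diagonal d) N Q, hdN, mul_assoc Q K, ← heK]
    simp only [mul_assoc]
    abel
  have hV : IsNilpotent V := by
    apply Commute.isNilpotent_sub
    · exact (LinearMap.commute_mulLeft_right N K).symm
    · obtain ⟨r, hr⟩ := hK
      exact ⟨r, by rw [LinearMap.pow_mulRight, hr, LinearMap.mulRight_zero_eq_zero]⟩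
    · obtain ⟨r, hr⟩ := hN
      exact ⟨r, by rw [LinearMap.pow_mulLeft, hr, LinearMap.mulLeft_zero_eq_zero]⟩
  have hP : L P = V P := by
    simp only [L, V, LinearMap.sub_apply, LinearMap.mulLeft_apply, LinearMap.mulRight_apply]
    rw [add_mul, mul_add] at h
    rw [sub_eq_sub_iff_add_eq_add, h, add_comm]
  have hpow : ∀ r : ℕ, (L ^ r) P = (V ^ r) P := by
    intro r
    induction r with
    | zero => rfl
    | succ r ih =>
      rw [pow_succ, Module.End.mul_apply, hP, ← Module.End.mul_apply, (hLV.pow_left r).eq,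
        Module.End.mul_apply, ih, ← Module.End.mul_apply, ← pow_succ']
  have hent : ∀ r : ℕ, ((L ^ r) P) i j = (d i - e j) ^ r * P i j := by
    intro r
    induction r with
    | zero => simp
    | succ r ih =>
      rw [pow_succ', Module.End.mul_apply]
      simp only [L, LinearMap.sub_apply, LinearMap.mulLeft_apply, LinearMap.mulRight_apply,
        Matrix.sub_apply, diagonal_mul, mul_diagonal] at ih ⊢
      rw [ih]
      ring
  obtain ⟨r, hr⟩ := hV
  have h0 := hent r
  rw [hpow, hr] at h0
  have h1 : (d i - e j) ^ r * P i j = 0 := by rw [← h0]; rfl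
  rcases mul_eq_zero.mp h1 with h2 | h2
  · exact sub_eq_zero.mp (by by_contra hne; exact pow_ne_zero r hne h2)
  · exact absurd h2 hij

theorem jordanConj_unique {n : Type*} [Fintype n] [DecidableEq n]
    (A B B' : Matrix n n ℂ) (h : Matrix.IsJordanConj A B) (h' : Matrix.IsJordanConj A B') :
    B = B' := by
  obtain ⟨T, D, N, hT, hD, hN, hc, hA, rfl⟩ := h
  obtain ⟨S, E, K, hS, hE, hK, hc', hA', rfl⟩ := h'
  obtain ⟨d, rfl⟩ : ∃ d, D = diagonal d := ⟨_, hD.diagonal_diag.symm⟩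
  obtain ⟨e, rfl⟩ : ∃ e, E = diagonal e := ⟨_, hE.diagonal_diag.symm⟩
  have hT' := (Matrix.isUnit_iff_isUnit_det T).mp hT
  have hS' := (Matrix.isUnit_iff_isUnit_det S).mp hS
  have key : (diagonal d + N) * (T⁻¹ * S) = (T⁻¹ * S) * (diagonal e + K) := by
    have h1 : T⁻¹ * (T * (diagonal d + N) * T⁻¹) * S
        = T⁻¹ * (S * (diagonal e + K) * S⁻¹) * S := by rw [← hA, ← hA']
    simpa [mul_assoc, Matrix.nonsing_inv_mul_cancel_left _ _ hT',
      Matrix.nonsing_inv_mul _ hS'] using h1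
  have h2 : (diagonal d).map (starRingEnd ℂ) * (T⁻¹ * S)
      = (T⁻¹ * S) * (diagonal e).map (starRingEnd ℂ) := by
    rw [diagonal_map (map_zero _), diagonal_map (map_zero _)]
    ext i j
    rw [diagonal_mul, mul_diagonal]
    by_cases hz : (T⁻¹ * S) i j = 0
    · rw [hz]; simp
    · rw [jordan_intertwine d e N K _ hN hK hc hc' key i j hz, mul_comm]
  have h3 := congrArg (fun Q => T * Q * S⁻¹) h2
  simpa [mul_assoc, Matrix.mul_nonsing_inv_cancel_left _ _ hT',
      Matrix.mul_nonsing_inv _ hS'] using h3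

/-- The conjugate of a block upper triangular matrix with disjoint spectra,
via the Sylvester equation `AX - XB = C`. -/
theorem conj_block_triangular {k m : ℕ}
    (A : Matrix (Fin k) (Fin k) ℂ) (B : Matrix (Fin m) (Fin m) ℂ)
    (C X : Matrix (Fin k) (Fin m) ℂ)
    (hspec : spectrum ℂ A ∩ spectrum ℂ B = ∅)
    (hX : A * X - X * B = C)
    (Ac : Matrix (Fin k) (Fin k) ℂ) (Bc : Matrix (Fin m) (Fin m) ℂ)
    (Mc : Matrix (Fin k ⊕ Fin m) (Fin k ⊕ Fin m) ℂ)
    (hAc : Matrix.IsJordanConj A Ac) (hBc : Matrix.IsJordanConj B Bc)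
    (hMc : Matrix.IsJordanConj (Matrix.fromBlocks A C 0 B) Mc) :
    Mc = Matrix.fromBlocks Ac (Ac * X - X * Bc) 0 Bc := by
  apply jordanConj_unique _ _ _ hMc
  subst hX
  obtain ⟨T, D, N, hT, hD, ⟨r, hr⟩, hc, rfl, rfl⟩ := hAc
  obtain ⟨S, E, K, hS, hE, ⟨s, hs⟩, hc', rfl, rfl⟩ := hBc
  have hT' := (Matrix.isUnit_iff_isUnit_det T).mp hT
  have hS' := (Matrix.isUnit_iff_isUnit_det S).mp hS
  have hmul : fromBlocks T (-(X * S)) 0 S * fromBlocks T⁻¹ (T⁻¹ * X) 0 S⁻¹ = 1 := by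
    rw [fromBlocks_multiply, ← fromBlocks_one]
    simp [mul_assoc, Matrix.mul_assoc, Matrix.mul_nonsing_inv_cancel_left _ _ hT',
      Matrix.mul_nonsing_inv _ hS', Matrix.mul_nonsing_inv _ hT']
  have hinv := Matrix.inv_eq_right_inv hmul
  have hpow : ∀ q : ℕ, (fromBlocks N 0 0 K) ^ q = fromBlocks (N ^ q) 0 0 (K ^ q) := by
    intro q
    induction q with
    | zero => simp
    | succ q ih => rw [pow_succ, ih, fromBlocks_multiply]; simp [pow_succ]
  refine ⟨fromBlocks T (-(X * S)) 0 S, fromBlocks D 0 0 E, fromBlocks N 0 0 K,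
    (IsUnit.of_mul_eq_one _ hmul), ?_, ⟨r + s, ?_⟩, ?_, ?_, ?_⟩
  · exact hD.fromBlocks hE
  · rw [hpow, pow_add, hr, zero_mul, pow_add, hs, mul_zero, fromBlocks_zero]
  · simp [fromBlocks_multiply, hc, hc']
  · rw [hinv, fromBlocks_add, fromBlocks_multiply, fromBlocks_multiply]
    simp [Matrix.mul_assoc, sub_eq_add_neg]
  · rw [hinv, fromBlocks_map, fromBlocks_multiply, fromBlocks_multiply]
    simp [Matrix.mul_assoc, sub_eq_add_neg]
end
end
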